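/- arXiv:1807.08441 — 3 statements merged into one kernel-verified Lean document; each statement's English description precedes it below -/
import Mathlib

section
/- Let p be a prime, c a positive integer with p-adic valuation β, and n a positive integer divisible by p^β with p odd. Let U be a multisubset of the cyclic group C_n = ⟨x⟩ in which every element occurs at most twice. If χ(Ū) ≡ 0 (mod c) for all nonprincipal characters χ of C_n, then there exists a multisubset E of {0,1,...,n/p^β − 1} with all multiplicities at most 2 such that U = x^E·⟨x^{n/p^β}⟩ (a multiset union of cosets of the subgroup of order p^β). -/
open Polynomial

theorem exists_int_aeval_eq_of_isIntegral {N : ℕ} [NeZero N] {ω : ℂ} (hω : IsPrimitiveRoot ω N)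
    {y : ℂ} (hy : IsIntegral ℤ y) (hmem : y ∈ IntermediateField.adjoin ℚ {ω}) :
    ∃ Y : ℤ[X], aeval ω Y = y := by
  let K := IntermediateField.adjoin ℚ {ω}
  have : IsCyclotomicExtension {N} ℚ K := by
    change IsCyclotomicExtension {N} ℚ (IntermediateField.adjoin ℚ {ω}).toSubalgebra
    rw [IntermediateField.adjoin_simple_toSubalgebra_of_isAlgebraic
      (hω.isIntegral (NeZero.pos N)).tower_top.isAlgebraic]
    exact hω.adjoin_isCyclotomicExtension ℚ
  let w : K := ⟨ω, IntermediateField.mem_adjoin_simple_self ℚ ω⟩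
  let v : K := ⟨y, hmem⟩
  have hw : IsPrimitiveRoot w N :=
    IsPrimitiveRoot.of_map_of_injective (f := algebraMap K ℂ) hω (algebraMap K ℂ).injective
  have hv : IsIntegral ℤ v :=
    (isIntegral_algebraMap_iff (algebraMap K ℂ).injective).1 hy
  obtain ⟨⟨u, hu⟩, huv⟩ :=
    (IsCyclotomicExtension.Rat.isIntegralClosure_adjoin_singleton hw).isIntegral_iff.1 hv
  rw [Algebra.adjoin_singleton_eq_range_aeval] at hu
  obtain ⟨Y, rfl⟩ := hu
  refine ⟨Y, ?_⟩
  have h := congrArg (algebraMap K ℂ) huv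
  change algebraMap K ℂ (aeval w Y) = y at h
  rw [← aeval_algebraMap_apply] at h
  exact h

theorem cyclotomic_dvd_map_of_aeval_eq_mul {p N : ℕ} (hp : p.Prime) (hN : 0 < N) {ω : ℂ}
    (hω : IsPrimitiveRoot ω N) (Q : ℤ[X]) {y : ℂ} (hy : IsIntegral ℤ y)
    (h : aeval ω Q = p * y) :
    cyclotomic N (ZMod p) ∣ Q.map (Int.castRingHom (ZMod p)) := by
  have : NeZero N := ⟨hN.ne'⟩
  have hp0 : (p : ℂ) ≠ 0 := Nat.cast_ne_zero.2 hp.ne_zero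
  have hmem : y ∈ IntermediateField.adjoin ℚ {ω} := by
    have hQ : aeval ω Q ∈ IntermediateField.adjoin ℚ {ω} := by
      have := aeval_algebraMap_apply ℂ
        (⟨ω, IntermediateField.mem_adjoin_simple_self ℚ ω⟩ : IntermediateField.adjoin ℚ {ω}) Q
      change aeval ω Q = _ at this
      rw [this]
      exact Subtype.property _
    rw [eq_div_of_mul_eq hp0 ((mul_comm _ _).trans h.symm)]
    exact div_mem hQ (natCast_mem _ p)
  obtain ⟨Y, rfl⟩ := exists_int_aeval_eq_of_isIntegral hω hy hmem
  have hdvd : cyclotomic N ℤ ∣ Q - (p : ℤ[X]) * Y := by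
    rw [cyclotomic_eq_minpoly hω hN]
    exact minpoly.isIntegrallyClosed_dvd (hω.isIntegral hN) (by simp [h])
  have := Polynomial.map_dvd (Int.castRingHom (ZMod p)) hdvd
  simpa using this

theorem isCoprime_cyclotomic_zmod {p m : ℕ} [Fact p.Prime] (hm : ¬ p ∣ m) {d e : ℕ}
    (hd : d ∈ m.divisors) (he : e ∈ m.divisors) (hde : d ≠ e) :
    IsCoprime (cyclotomic d (ZMod p)) (cyclotomic e (ZMod p)) := by
  have hsep : (X ^ m - 1 : (ZMod p)[X]).Separable :=
    X_pow_sub_one_separable_iff.2 (by rwa [Ne, ZMod.natCast_eq_zero_iff])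
  refine (hsep.of_dvd ?_).isCoprime
  rw [← prod_cyclotomic_eq_X_pow_sub_one (Nat.pos_of_mem_divisors hd |>.trans_le
    (Nat.divisor_le hd)), ← Finset.prod_pair (f := fun d => cyclotomic d (ZMod p)) hde]
  exact Finset.prod_dvd_prod_of_subset _ _ _ (by grind)

theorem X_pow_sub_one_dvd_mul_of_cyclotomic_dvd {p n : ℕ} [hp : Fact p.Prime] (hn : 0 < n)
    (hpn : p ∣ n) (F : (ZMod p)[X])
    (h : ∀ N, N ∣ n → 1 < N → cyclotomic N (ZMod p) ∣ F) :
    X ^ n - 1 ∣ F * (X ^ (n / p) - 1) := by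
  obtain ⟨s, m, hm, rfl⟩ := Nat.exists_eq_pow_mul_and_not_dvd hn.ne' p hp.out.ne_one
  have hm0 : 0 < m := Nat.pos_of_mul_pos_left hn
  have hs : s ≠ 0 := by rintro rfl; simp_all
  obtain ⟨s, rfl⟩ := Nat.exists_eq_succ_of_ne_zero hs
  have hdiv : p ^ (s + 1) * m / p = p ^ s * m := by
    rw [pow_succ', mul_assoc, Nat.mul_div_cancel_left _ hp.out.pos]
  have hX (k : ℕ) : (X ^ (p ^ k * m) - 1 : (ZMod p)[X]) = (X ^ m - 1) ^ p ^ k := by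
    rw [sub_pow_char_pow, one_pow, ← pow_mul, mul_comm m]
  have hF : (X ^ m - 1) ^ (p ^ (s + 1) - p ^ s) ∣ F := by
    rw [← prod_cyclotomic_eq_X_pow_sub_one hm0, ← Finset.prod_pow]
    refine Finset.prod_dvd_of_coprime
      (fun d hd e he hde => (isCoprime_cyclotomic_zmod hm hd he hde).pow) fun d hd => ?_
    have hd' := Nat.dvd_of_mem_divisors hd
    have := cyclotomic_mul_prime_pow_eq (ZMod p) (fun hpd => hm (hpd.trans hd')) (Nat.succ_pos s)
    rw [Nat.succ_eq_add_one, Nat.add_sub_cancel] at this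
    rw [← this]
    refine h _ (mul_dvd_mul_left _ hd') ?_
    exact (Nat.one_lt_pow (Nat.succ_ne_zero s) hp.out.one_lt).trans_le
      (Nat.le_mul_of_pos_right _ (Nat.pos_of_mem_divisors hd))
  rw [hdiv, hX, hX]
  have hle : p ^ s ≤ p ^ (s + 1) := Nat.pow_le_pow_right hp.out.pos (Nat.le_succ s)
  have := mul_dvd_mul_right hF ((X ^ m - 1) ^ p ^ s)
  rwa [← pow_add, Nat.sub_add_cancel hle] at this

theorem coeff_eq_coeff_add_of_X_pow_sub_one_dvd {R : Type*} [CommRing R] [IsDomain R] {n k : ℕ}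
    (hn : 0 < n) {F : R[X]} (hF : F.natDegree < n) (hk : 0 < k)
    (h : X ^ n - 1 ∣ F * (X ^ k - 1)) {i : ℕ} (hi : i + k < n) :
    F.coeff i = F.coeff (i + k) := by
  have hne (j : ℕ) (hj : 0 < j) : (X ^ j - 1 : R[X]) ≠ 0 := X_pow_sub_C_ne_zero hj 1
  have hdeg (j : ℕ) : (X ^ j - 1 : R[X]).natDegree = j := natDegree_X_pow_sub_C (r := 1)
  obtain ⟨B, hB⟩ := h
  have hB0 : B.coeff (i + k) = 0 := by
    by_cases hB' : B = 0
    · simp [hB']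
    have hF' : F ≠ 0 := by
      rintro rfl
      simp [hB', hne n hn] at hB
    apply coeff_eq_zero_of_natDegree_lt
    have := congrArg natDegree hB
    rw [natDegree_mul hF' (hne k hk), natDegree_mul (hne n hn) hB', hdeg, hdeg] at this
    omega
  have := congrArg (fun P => P.coeff (i + k)) hB
  simp only [mul_sub, sub_mul, one_mul, mul_one, coeff_sub, coeff_mul_X_pow, coeff_X_pow_mul',
    if_neg hi.not_ge, hB0, sub_zero] at this
  exact sub_eq_zero.1 this

theorem eq_apply_mod_of_eq_add {α : Type*} {n k : ℕ} {f : ℕ → α}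
    (h : ∀ i, i + k < n → f i = f (i + k)) {i : ℕ} (hi : i < n) : f i = f (i % k) := by
  have key (q r : ℕ) (hq : r + k * q < n) : f (r + k * q) = f r := by
    induction q with
    | zero => simp
    | succ q ih =>
      rw [Nat.mul_succ, ← add_assoc] at hq ⊢
      rw [← h _ hq, ih (by omega)]
  conv_lhs => rw [← Nat.mod_add_div i k]
  exact key _ _ (by rwa [Nat.mod_add_div])

theorem eq_apply_mod_div_prime {p n : ℕ} (hp : p.Prime) (hn : 0 < n) (hpn : p ∣ n) (f : ℕ → ℕ)
    (hf : ∀ i, f i < p)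
    (h : ∀ ω : ℂ, ω ^ n = 1 → ω ≠ 1 →
      ∃ y, IsIntegral ℤ y ∧ ∑ i ∈ Finset.range n, (f i : ℂ) * ω ^ i = p * y)
    {i : ℕ} (hi : i < n) : f i = f (i % (n / p)) := by
  have : Fact p.Prime := ⟨hp⟩
  let Q : ℤ[X] := ∑ i ∈ Finset.range n, C (f i : ℤ) * X ^ i
  let F := Q.map (Int.castRingHom (ZMod p))
  have hF : F = ∑ i ∈ Finset.range n, C (f i : ZMod p) * X ^ i := by
    simp [F, Q, Polynomial.map_sum]
  have hcoeff (j : ℕ) (hj : j < n) : F.coeff j = f j := by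
    simp [hF, coeff_X_pow, hj]
  have hdeg : F.natDegree < n := by
    rw [hF]
    refine (natDegree_sum_le_of_forall_le (n := n - 1) _ _ fun i hi => ?_).trans_lt (by omega)
    exact (natDegree_C_mul_X_pow_le _ _).trans (Nat.le_sub_one_of_lt (Finset.mem_range.1 hi))
  have hdvd := X_pow_sub_one_dvd_mul_of_cyclotomic_dvd hn hpn F fun N hN hN1 => by
    have hω := Complex.isPrimitiveRoot_exp N (by omega)
    obtain ⟨y, hy, hsum⟩ := h _ ((hω.pow_eq_one_iff_dvd n).2 hN) (hω.ne_one hN1)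
    exact cyclotomic_dvd_map_of_aeval_eq_mul hp (by omega) hω Q hy (by simpa [Q] using hsum)
  refine eq_apply_mod_of_eq_add (fun j hj => ?_) hi
  have := coeff_eq_coeff_add_of_X_pow_sub_one_dvd hn hdeg
    (Nat.div_pos (Nat.le_of_dvd hn hpn) hp.pos) hdvd hj
  rw [hcoeff j ((Nat.le_add_right _ _).trans_lt hj), hcoeff _ hj, ZMod.natCast_eq_natCast_iff] at this
  exact this.eq_of_lt_of_lt (hf _) (hf _)

theorem sum_range_mul_eq_sum_sum {M : Type*} [AddCommMonoid M] (m k : ℕ) (g : ℕ → M) :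
    ∑ i ∈ Finset.range (m * k), g i =
      ∑ j ∈ Finset.range m, ∑ r ∈ Finset.range k, g (r + j * k) := by
  induction m with
  | zero => simp
  | succ m ih =>
    rw [Nat.succ_mul, Finset.sum_range_add, ih, Finset.sum_range_succ]
    simp [add_comm]

theorem eq_apply_mod_div_prime_pow {p : ℕ} (hp : p.Prime) (β : ℕ) :
    ∀ {c n : ℕ} (f : ℕ → ℕ), 0 < n → p ^ β ∣ c → p ^ β ∣ n → (∀ i, f i < p) →
    (∀ ω : ℂ, ω ^ n = 1 → ω ≠ 1 →
      ∃ y, IsIntegral ℤ y ∧ ∑ i ∈ Finset.range n, (f i : ℂ) * ω ^ i = c * y) →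
    ∀ i < n, f i = f (i % (n / p ^ β)) := by
  induction β with
  | zero =>
    intro c n f _ _ _ _ _ i hi
    rw [pow_zero, Nat.div_one, Nat.mod_eq_of_lt hi]
  | succ β ih =>
    intro c n f hn hc hdvd hf h i hi
    obtain ⟨c, rfl⟩ : p ∣ c := (dvd_pow_self p β.succ_ne_zero).trans hc
    obtain ⟨n, rfl⟩ : p ∣ n := (dvd_pow_self p β.succ_ne_zero).trans hdvd
    rw [pow_succ'] at hc hdvd
    have hc' := Nat.dvd_of_mul_dvd_mul_left hp.pos hc
    have hdvd' := Nat.dvd_of_mul_dvd_mul_left hp.pos hdvd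
    have hn' : 0 < n := Nat.pos_of_mul_pos_left hn
    have hper {j : ℕ} (hj : j < p * n) : f j = f (j % n) := by
      have := eq_apply_mod_div_prime hp hn (dvd_mul_right p n) f hf (fun ω h1 h2 => by
        obtain ⟨y, hy, hsum⟩ := h ω h1 h2
        exact ⟨c * y, (isIntegral_algebraMap (x := (c : ℤ)) |>.mul hy), by
          rw [hsum]; push_cast; ring⟩) hj
      rwa [Nat.mul_div_cancel_left _ hp.pos] at this
    have hih := ih (c := c) f hn' hc' hdvd' hf fun ω h1 h2 => by
      obtain ⟨y, hy, hsum⟩ := h ω (by rw [mul_comm, pow_mul, h1, one_pow]) h2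
      refine ⟨y, hy, mul_left_cancel₀ (Nat.cast_ne_zero.2 hp.ne_zero : (p : ℂ) ≠ 0) ?_⟩
      rw [← mul_assoc, ← Nat.cast_mul, ← hsum, sum_range_mul_eq_sum_sum, ← nsmul_eq_mul]
      nth_rw 1 [← Finset.card_range p]
      rw [← Finset.sum_const]
      refine Finset.sum_congr rfl fun j hj => Finset.sum_congr rfl fun r hr => ?_
      have hr' := Finset.mem_range.1 hr
      have hj' := Finset.mem_range.1 hj
      have hlt : r + j * n < p * n := by nlinarith
      rw [hper hlt, Nat.add_mul_mod_self_right, Nat.mod_eq_of_lt hr', pow_add, mul_comm j n,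
        pow_mul, h1, one_pow, mul_one]
    rw [hper hi, hih _ (Nat.mod_lt _ hn'), pow_succ', Nat.mul_div_mul_left _ _ hp.pos,
      Nat.mod_mod_of_dvd _ (Nat.div_dvd_of_dvd hdvd')]

theorem sum_map_eq_sum_range_count {n : ℕ} [NeZero n] (U : Multiset (ZMod n)) (g : ℕ → ℂ) :
    (U.map fun i => g i.val).sum =
      ∑ i ∈ Finset.range n, (U.count (i : ZMod n) : ℂ) * g i := by
  rw [Finset.sum_multiset_map_count,
    Finset.sum_subset (Finset.subset_univ _) (fun i _ hi => by simp_all)]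
  refine Finset.sum_bij' (fun a _ => a.val) (fun i _ => (i : ZMod n)) ?_ ?_ ?_ ?_ ?_
  · simp [ZMod.val_lt]
  · simp
  · simp
  · intro i hi
    exact ZMod.val_cast_of_lt (Finset.mem_range.1 hi)
  · simp

theorem count_map_range_natCast {n k m : ℕ} (hk : 0 < k) (hn : m * k = n) {a : ℕ} (ha : a < k)
    (b : ZMod n) [NeZero n] :
    ((Multiset.range m).map fun j => ((a + j * k : ℕ) : ZMod n)).count b =
      if b.val % k = a then 1 else 0 := by
  have hlt {j : ℕ} (hj : j < m) : a + j * k < n := by nlinarith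
  split_ifs with hb
  · refine Multiset.count_eq_one_of_mem ((Multiset.nodup_map_iff_inj_on (Multiset.nodup_range m)).2
      fun i hi j hj hij => ?_) (Multiset.mem_map.2 ⟨b.val / k, ?_, ?_⟩)
    · have := congrArg ZMod.val hij
      rw [ZMod.val_cast_of_lt (hlt (Multiset.mem_range.1 hi)),
        ZMod.val_cast_of_lt (hlt (Multiset.mem_range.1 hj))] at this
      exact Nat.eq_of_mul_eq_mul_right hk (Nat.add_left_cancel this)
    · rw [Multiset.mem_range, Nat.div_lt_iff_lt_mul hk, hn]
      exact b.val_lt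
    · rw [← hb, mul_comm, Nat.mod_add_div, ZMod.natCast_zmod_val]
  · refine Multiset.count_eq_zero.2 fun hmem => hb ?_
    obtain ⟨j, hj, rfl⟩ := Multiset.mem_map.1 hmem
    rw [ZMod.val_cast_of_lt (hlt (Multiset.mem_range.1 hj)), Nat.add_mul_mod_self_right,
      Nat.mod_eq_of_lt ha]


/-- Let `p` be an odd prime, `c > 0` with `p`-adic valuation `β`, and
`p^β ∣ n`. If `U` is a multisubset of `C_n = ZMod n` (written additively) with all
multiplicities at most `2` and `χ(Ū) ≡ 0 (mod c)` (in `ℤ[ζ_n]`) for all nonprincipal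
characters `χ`, then `U` is a multiset union of cosets of the subgroup of order `p^β`,
indexed by a multiset `E ⊆ {0,…,n/p^β − 1}` with multiplicities at most `2`. -/
theorem multiset_coset_structure_odd_prime (p β c n : ℕ) (hp : p.Prime) (hp2 : p ≠ 2)
    (hc : 0 < c) (hβ : padicValNat p c = β) (hdvd : p ^ β ∣ n) (hn : 0 < n)
    (ζ : ℂ) (hζ : IsPrimitiveRoot ζ n)
    (U : Multiset (ZMod n)) (hU2 : ∀ a : ZMod n, U.count a ≤ 2)
    (hchar : ∀ z : ZMod n, z ≠ 0 →
      ∃ y ∈ Algebra.adjoin ℤ ({ζ} : Set ℂ),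
        (U.map (fun i => ζ ^ (i.val * z.val))).sum = (c : ℂ) * y) :
    ∃ E : Multiset ℕ, (∀ a ∈ E, a < n / p ^ β) ∧ (∀ a : ℕ, E.count a ≤ 2) ∧
      U = E.bind (fun a => (Multiset.range (p ^ β)).map
        (fun j => ((a + j * (n / p ^ β) : ℕ) : ZMod n))) := by
  have : NeZero n := ⟨hn.ne'⟩
  let f : ℕ → ℕ := fun i => U.count (i : ZMod n)
  have hp3 : 2 < p := lt_of_le_of_ne hp.two_le (Ne.symm hp2)
  have hf (i : ℕ) (hi : i < n) : f i = f (i % (n / p ^ β)) := by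
    refine eq_apply_mod_div_prime_pow hp β f hn (hβ ▸ pow_padicValNat_dvd) hdvd
      (fun i => (hU2 _).trans_lt hp3) (fun ω h1 h2 => ?_) i hi
    obtain ⟨k, hk, rfl⟩ := hζ.eq_pow_of_pow_eq_one h1
    obtain ⟨y, hy, hsum⟩ := hchar k fun hk0 => h2 <| by
      rw [(Nat.eq_zero_of_dvd_of_lt ((ZMod.natCast_eq_zero_iff k n).1 hk0) hk), pow_zero]
    refine ⟨y, ?_, ?_⟩
    · have hle : Algebra.adjoin ℤ {ζ} ≤ integralClosure ℤ ℂ := 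
        Algebra.adjoin_le (Set.singleton_subset_iff.2 (hζ.isIntegral hn))
      exact hle hy
    · rw [← hsum, sum_map_eq_sum_range_count U fun i => ζ ^ (i * (k : ZMod n).val),
        ZMod.val_cast_of_lt hk]
      exact Finset.sum_congr rfl fun i _ => by rw [← pow_mul, mul_comm k]
  have ht : 0 < n / p ^ β := Nat.div_pos (Nat.le_of_dvd hn hdvd) (pow_pos hp.pos β)
  let E : Multiset ℕ := ∑ a ∈ Finset.range (n / p ^ β), Multiset.replicate (f a) a
  refine ⟨E, fun a ha => ?_, fun a => ?_, Multiset.ext.2 fun b => ?_⟩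
  · obtain ⟨b, hb, hab⟩ := Multiset.mem_sum.1 ha
    rw [Multiset.eq_of_mem_replicate hab]
    exact Finset.mem_range.1 hb
  · simp only [E, Multiset.count_sum', Multiset.count_replicate]
    rw [Finset.sum_ite_eq']
    split_ifs
    exacts [hU2 _, Nat.zero_le _]
  · have hb := hf b.val b.val_lt
    simp only [f, ZMod.natCast_zmod_val] at hb
    have hbind (g : ℕ → Multiset (ZMod n)) : (E.bind g).count b =
        ∑ a ∈ Finset.range (n / p ^ β), f a * (g a).count b := by
      rw [Multiset.count_bind, ← Multiset.coe_mapAddMonoidHom, ← Multiset.coe_sumAddMonoidHom]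
      simp [E, map_sum]
    rw [hbind, hb, Finset.sum_congr rfl fun a ha => by
      rw [count_map_range_natCast ht (Nat.mul_div_cancel' hdvd) (Finset.mem_range.1 ha)]]
    simp [f, Nat.mod_lt _ ht]
end

section
/- Let c be an even positive integer with 2-adic valuation ν(c), and let n be divisible by 2^{ν(c)}. Let U be a multisubset of the cyclic group C_n = ⟨x⟩ in which every element occurs at most twice. If χ(Ū) ≡ 0 (mod c) for all nonprincipal characters χ of C_n, then there exists a multisubset E₀ of {0,1,...,2n/2^{ν(c)} − 1} such that U = x^{E₀}·⟨x^{2n/2^{ν(c)}}⟩. -/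
open Polynomial in
/-- If an integral combination of `1, η, …, η ^ (2 ^ r - 1)`, for `η` a primitive `2 ^ (r + 1)`-th
root of unity, is divisible by `C` among the algebraic integers, then so are its coefficients. -/
theorem dvd_of_sum_primitiveRoot_two_pow {r : ℕ} {η : ℂ} (hη : IsPrimitiveRoot η (2 ^ (r + 1)))
    {C : ℤ} (hC : C ≠ 0) (a : ℕ → ℤ) {y : ℂ} (hy : IsIntegral ℤ y)
    (h : ∑ j ∈ Finset.range (2 ^ r), (a j : ℂ) * η ^ j = C * y) {j : ℕ} (hj : j < 2 ^ r) :
    C ∣ a j := by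
  have : Fact (Nat.Prime 2) := ⟨Nat.prime_two⟩
  let K := IntermediateField.adjoin ℚ ({η} : Set ℂ)
  have hcyc : IsCyclotomicExtension {2 ^ (r + 1)} ℚ K := by
    change IsCyclotomicExtension {2 ^ (r + 1)} ℚ K.toSubalgebra
    rw [IntermediateField.adjoin_simple_toSubalgebra_of_isAlgebraic
      ((hη.isIntegral (by positivity)).tower_top.isAlgebraic)]
    exact hη.adjoin_isCyclotomicExtension ℚ
  have hmem : η ∈ K := IntermediateField.mem_adjoin_simple_self ℚ η
  let η' : K := ⟨η, hmem⟩
  have hη' : IsPrimitiveRoot η' (2 ^ (r + 1)) :=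
    IsPrimitiveRoot.of_map_of_injective (f := algebraMap K ℂ) hη (algebraMap K ℂ).injective
  have hC' : (C : ℂ) ≠ 0 := by exact_mod_cast hC
  have hyK : y ∈ K := by
    have : y = (C : ℂ)⁻¹ * ∑ j ∈ Finset.range (2 ^ r), (a j : ℂ) * η ^ j := by
      rw [h]; field_simp
    rw [this]
    exact K.mul_mem (K.inv_mem (intCast_mem K C))
      (K.sum_mem fun i _ => K.mul_mem (intCast_mem K _) (K.pow_mem hmem i))
  have hyi : IsIntegral ℤ (⟨y, hyK⟩ : K) :=
    (isIntegral_algHom_iff ((algebraMap K ℂ).toIntAlgHom) (algebraMap K ℂ).injective).1 hy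
  have hcl := IsCyclotomicExtension.Rat.isIntegralClosure_adjoin_singleton_of_prime_pow hη'
  obtain ⟨⟨w, hw⟩, hwy⟩ := hcl.isIntegral_iff.1 hyi
  rw [Algebra.adjoin_singleton_eq_range_aeval] at hw
  obtain ⟨P, hP⟩ := hw
  have hPy : aeval η P = y := by
    have h1 : algebraMap K ℂ (aeval η' P) = aeval η P := by
      rw [← aeval_algebraMap_apply]; rfl
    rw [← h1, show aeval η' P = w from hP]
    exact congrArg (algebraMap K ℂ) hwy
  set Φ := cyclotomic (2 ^ (r + 1)) ℤ with hΦ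
  have hpos : 0 < 2 ^ (r + 1) := by positivity
  have hΦm : Φ.Monic := cyclotomic.monic _ _
  have hΦd : Φ.degree = (2 ^ r : ℕ) := by
    rw [hΦ, degree_cyclotomic, Nat.totient_prime_pow_succ Nat.prime_two]; simp
  have hΦ0 : aeval η Φ = 0 := by
    rw [hΦ, cyclotomic_eq_minpoly hη hpos]; exact minpoly.aeval _ _
  have hR : aeval η (P %ₘ Φ) = y := by
    rw [← hPy]
    conv_rhs => rw [← modByMonic_add_div P Φ]
    simp [hΦ0]
  let Q : ℤ[X] := ∑ j ∈ Finset.range (2 ^ r), Polynomial.C (a j) * X ^ j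
  have hQd : Q.degree < (2 ^ r : ℕ) := by
    refine (degree_sum_le _ _).trans_lt ?_
    refine (Finset.sup_lt_iff (by exact WithBot.bot_lt_coe _)).2 fun i hi => ?_
    exact (degree_C_mul_X_pow_le _ _).trans_lt (by exact_mod_cast Finset.mem_range.1 hi)
  have hdiff : Q - Polynomial.C C * (P %ₘ Φ) = 0 := by
    by_contra hne
    have hdvd : minpoly ℤ η ∣ Q - Polynomial.C C * (P %ₘ Φ) := by
      refine minpoly.isIntegrallyClosed_dvd (hη.isIntegral hpos) ?_
      rw [map_sub, map_mul, hR]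
      simp [Q, h]
    rw [← cyclotomic_eq_minpoly hη hpos] at hdvd
    have := degree_le_of_dvd hdvd hne
    refine absurd this (not_le.2 ?_)
    rw [hΦd]
    refine (degree_sub_le _ _).trans_lt (max_lt hQd ?_)
    rw [degree_C_mul hC, ← hΦd]
    exact degree_modByMonic_lt _ hΦm
  have := congrArg (fun p => coeff p j) hdiff
  simp only [Q, coeff_sub, finsetSum_coeff, coeff_C_mul, coeff_X_pow, coeff_zero] at this
  rw [Finset.sum_eq_single j (by simp +contextual [eq_comm]) (by simp [hj])] at this
  exact ⟨_, by simpa [sub_eq_zero] using this⟩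

theorem sum_range_mul_eq {M : Type*} [AddCommMonoid M] (F : ℕ → M) (a b : ℕ) :
    ∑ i ∈ Finset.range (a * b), F i =
      ∑ j ∈ Finset.range b, ∑ i ∈ Finset.range a, F (i + j * a) := by
  induction b with
  | zero => simp
  | succ b ih =>
    rw [Nat.mul_succ, Finset.sum_range_add, ih, Finset.sum_range_succ]
    simp [add_comm, mul_comm]

theorem sum_range_shift_one {M : Type*} [AddCommMonoid M] {n : ℕ} (F : ℕ → M) (hF : F n = F 0) :
    ∑ i ∈ Finset.range n, F (i + 1) = ∑ i ∈ Finset.range n, F i := by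
  cases n with
  | zero => simp
  | succ n => rw [Finset.sum_range_succ, hF, Finset.sum_range_succ']

/-- Divisibility of a character sum is invariant under translation of the function. -/
theorem exists_isIntegral_sum_translate {n : ℕ} {ω : ℂ} (hω : ω ^ n = 1)
    (hn : 0 < n) (C : ℤ) (f : ℕ → ℤ) (hf : ∀ i, f (i + n) = f i)
    (h : ∃ y, IsIntegral ℤ y ∧ ∑ i ∈ Finset.range n, (f i : ℂ) * ω ^ i = C * y) (a : ℕ) :
    ∃ y, IsIntegral ℤ y ∧ ∑ i ∈ Finset.range n, (f (i + a) : ℂ) * ω ^ i = C * y := by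
  induction a with
  | zero => simpa using h
  | succ a ih =>
    obtain ⟨y, hy, hsum⟩ := ih
    have hint : IsIntegral ℤ ω :=
      IsIntegral.of_pow hn (by rw [hω]; exact isIntegral_one)
    refine ⟨ω ^ (n - 1) * y, (hint.pow _).mul hy, ?_⟩
    have hshift := sum_range_shift_one (n := n) (fun i => (f (i + a) : ℂ) * ω ^ i)
      (by simp [hω, add_comm n a, hf])
    rw [hsum] at hshift
    rw [mul_left_comm, ← hshift, Finset.mul_sum]
    refine Finset.sum_congr rfl fun i _ => ?_
    have : ω ^ (n - 1) * ω ^ (i + 1) = ω ^ i := by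
      rw [← pow_add, show n - 1 + (i + 1) = n + i by omega, pow_add, hω, one_mul]
    rw [mul_left_comm, this, add_right_comm, add_assoc]

/-- If all odd character sums of `f` on a cyclic group of order `2 ^ (r + 1) * m`, with `m` odd,
are divisible by `2 ^ k`, then so is `f 0 - f (n / 2)`. -/
theorem two_pow_dvd_sub_of_odd_sums {r m k : ℕ} (hm : Odd m) {ζ : ℂ}
    (hζ : IsPrimitiveRoot ζ (2 ^ (r + 1) * m)) (f : ℕ → ℤ)
    (h : ∀ z, Odd z → ∃ y, IsIntegral ℤ y ∧
      ∑ i ∈ Finset.range (2 ^ (r + 1) * m), (f i : ℂ) * (ζ ^ z) ^ i = (2 ^ k : ℤ) * y) :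
    (2 ^ k : ℤ) ∣ f 0 - f (2 ^ r * m) := by
  have hm0 : 0 < m := hm.pos
  have hpos : 0 < 2 ^ (r + 1) * m := by positivity
  have hodd : ∀ t : ℕ, Odd (1 + 2 ^ (r + 1) * t) := fun t => by
    rw [pow_succ]; exact ⟨2 ^ r * t, by ring⟩
  choose y hy hsum using fun t : ℕ => h _ (hodd t)
  have hη : IsPrimitiveRoot (ζ ^ m) (2 ^ (r + 1)) := hζ.pow hpos (mul_comm _ _)
  have hgeom : ∀ i, ∑ t ∈ Finset.range m, (ζ ^ (2 ^ (r + 1) * i)) ^ t =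
      if m ∣ i then (m : ℂ) else 0 := by
    intro i
    have hw : ζ ^ (2 ^ (r + 1) * i) = 1 ↔ m ∣ i := by
      rw [hζ.pow_eq_one_iff_dvd]
      exact Nat.mul_dvd_mul_iff_left (by positivity)
    split_ifs with hi
    · simp [hw.2 hi]
    · rw [geom_sum_eq (fun h1 => hi (hw.1 h1)), ← pow_mul, mul_assoc, mul_comm i m, ← mul_assoc,
        pow_mul, hζ.pow_eq_one]
      simp
  have key : ∑ t ∈ Finset.range m, ∑ i ∈ Finset.range (2 ^ (r + 1) * m),
      (f i : ℂ) * (ζ ^ (1 + 2 ^ (r + 1) * t)) ^ i =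
      ∑ j ∈ Finset.range (2 ^ (r + 1)), (m : ℂ) * (f (m * j) * (ζ ^ m) ^ j) := by
    rw [Finset.sum_comm]
    have h1 : ∀ i, ∑ t ∈ Finset.range m, (f i : ℂ) * (ζ ^ (1 + 2 ^ (r + 1) * t)) ^ i =
        if m ∣ i then (m : ℂ) * (f i * ζ ^ i) else 0 := by
      intro i
      have : ∀ t, (f i : ℂ) * (ζ ^ (1 + 2 ^ (r + 1) * t)) ^ i =
          (f i * ζ ^ i) * (ζ ^ (2 ^ (r + 1) * i)) ^ t := by
        intro t
        rw [← pow_mul, ← pow_mul, mul_assoc, ← pow_add]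
        congr 2; ring
      simp_rw [this, ← Finset.mul_sum, hgeom]
      split_ifs <;> ring
    simp_rw [h1]
    rw [mul_comm (2 ^ (r + 1)) m, sum_range_mul_eq]
    refine Finset.sum_congr rfl fun j _ => ?_
    rw [Finset.sum_eq_single 0]
    · simp [mul_comm j m, pow_mul]
    · intro i hi hi0
      rw [if_neg]
      rw [Nat.dvd_add_left (Dvd.intro_left j rfl)]
      exact Nat.not_dvd_of_pos_of_lt (Nat.pos_of_ne_zero hi0) (Finset.mem_range.1 hi)
    · simp [hm0.ne']
  have hneg : (ζ ^ m) ^ 2 ^ r = -1 :=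
    (hη.pow (by positivity) (pow_succ 2 r)).eq_neg_one_of_two_right
  have hfold : ∑ j ∈ Finset.range (2 ^ r),
      (((m : ℤ) * (f (m * j) - f (m * (2 ^ r + j))) : ℤ) : ℂ) * (ζ ^ m) ^ j =
      ((2 ^ k : ℤ) : ℂ) * ∑ t ∈ Finset.range m, y t := by
    rw [Finset.mul_sum, ← Finset.sum_congr rfl fun t _ => hsum t, key, pow_succ, mul_two,
      Finset.sum_range_add, ← Finset.sum_add_distrib]
    refine Finset.sum_congr rfl fun j _ => ?_
    rw [pow_add, hneg]
    push_cast
    ring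
  have hdvd := dvd_of_sum_primitiveRoot_two_pow hη (by positivity) _
    (IsIntegral.sum _ fun t _ => hy t) hfold (j := 0) (by positivity)
  have hcop : IsCoprime (2 ^ k : ℤ) (m : ℤ) := by
    have : Nat.Coprime (2 ^ k) m := (Nat.coprime_two_left.2 hm).pow_left k
    exact_mod_cast Nat.isCoprime_iff_coprime.2 this
  simpa [mul_comm m] using hcop.dvd_of_dvd_mul_left hdvd

/-- A `{0, 1, 2}`-valued function on a cyclic group of order `2 ^ (k + 1) * n'` whose nonprincipal
character sums are all divisible by `2 ^ (k + 1)` has period `2 * n'`. -/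
theorem periodic_of_two_pow_dvd_char_sums (k : ℕ) : ∀ (n' : ℕ) (ζ : ℂ) (f : ℕ → ℤ), 0 < n' →
    IsPrimitiveRoot ζ (2 ^ (k + 1) * n') → (∀ i, f (i + 2 ^ (k + 1) * n') = f i) →
    (∀ i, 0 ≤ f i ∧ f i ≤ 2) →
    (∀ z, ¬ 2 ^ (k + 1) * n' ∣ z → ∃ y, IsIntegral ℤ y ∧
      ∑ i ∈ Finset.range (2 ^ (k + 1) * n'), (f i : ℂ) * (ζ ^ z) ^ i = (2 ^ (k + 1) : ℤ) * y) →
    ∀ i, f (i + 2 * n') = f i := by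
  induction k with
  | zero => intro n' ζ f _ _ hf _ _; simpa using hf
  | succ k ih =>
    intro n' ζ f hn' hζ hf hf2 h
    set q := 2 ^ (k + 1) * n' with hq
    have hn : 2 ^ (k + 1 + 1) * n' = q * 2 := by rw [hq]; ring
    have hq0 : 0 < q := by positivity
    have hper : ∀ a, f (a + q) = f a := by
      intro a
      obtain ⟨s, m, hm, hsm⟩ := Nat.exists_eq_two_pow_mul_odd hq0.ne'
      have hn2 : 2 ^ (k + 1 + 1) * n' = 2 ^ (s + 1) * m := by rw [hn, hsm]; ring
      rw [hn2] at hζ hf h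
      have := two_pow_dvd_sub_of_odd_sums (k := k + 1 + 1) hm hζ (fun i => f (i + a)) ?_
      · rw [← hsm] at this
        have h4 : (4 : ℤ) ∣ f (0 + a) - f (q + a) :=
          (Dvd.intro_left (2 ^ k) (by ring)).trans this
        have h0 := hf2 a
        have h1 := hf2 (q + a)
        rw [zero_add] at h4
        rw [add_comm a q]
        omega
      · intro z hz
        refine exists_isIntegral_sum_translate ?_ (by have := hm.pos; positivity) _ f hf
          (h z fun hdvd => ?_) a
        · rw [← pow_mul, mul_comm, pow_mul, hζ.pow_eq_one, one_pow]
        · have : 2 ∣ z := (Dvd.intro (2 ^ s * m) (by ring)).trans hdvd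
          exact (Nat.not_even_iff_odd.2 hz) (even_iff_two_dvd.2 this)
    refine ih n' (ζ ^ 2) f hn' (hζ.pow (by positivity) (by rw [hn, mul_comm])) hper hf2 ?_
    intro z hz
    obtain ⟨y, hy, hsum⟩ := h (2 * z) (by
      rw [hn, mul_comm q 2]
      exact fun hd => hz (Nat.dvd_of_mul_dvd_mul_left two_pos hd))
    refine ⟨y, hy, ?_⟩
    have hω : ((ζ ^ 2) ^ z) ^ q = 1 := by
      rw [← pow_mul, ← pow_mul, show 2 * (z * q) = 2 ^ (k + 1 + 1) * n' * z by rw [hn]; ring,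
        pow_mul, hζ.pow_eq_one, one_pow]
    rw [hn, mul_two, Finset.sum_range_add, pow_mul] at hsum
    have h2 : ∀ i, (f (q + i) : ℂ) * ((ζ ^ 2) ^ z) ^ (q + i) = f i * ((ζ ^ 2) ^ z) ^ i := by
      intro i
      rw [add_comm q i, hper, pow_add, hω, mul_one]
    simp_rw [h2] at hsum
    rw [← hq]
    have h3 : ((2 ^ (k + 1 + 1) : ℤ) : ℂ) = 2 * (2 ^ (k + 1) : ℤ) := by push_cast; ring
    rw [h3] at hsum
    linear_combination hsum / 2

theorem multiset_eq_sum_range_count {n : ℕ} (hn : 0 < n) (U : Multiset (ZMod n)) :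
    U = ∑ i ∈ Finset.range n, Multiset.replicate (U.count (i : ZMod n)) (i : ZMod n) := by
  have : NeZero n := ⟨hn.ne'⟩
  ext b
  rw [Multiset.count_sum']
  simp_rw [Multiset.count_replicate]
  rw [Finset.sum_eq_single b.val]
  · simp
  · intro i hi hne
    rw [if_neg]
    rintro rfl
    exact hne (ZMod.val_cast_of_lt (Finset.mem_range.1 hi)).symm
  · intro hb
    exact absurd (Finset.mem_range.2 (ZMod.val_lt b)) hb

theorem sum_replicate_bind {α β : Type*} (s : Finset α) (g : α → ℕ) (F : α → Multiset β) :
    (∑ a ∈ s, Multiset.replicate (g a) a).bind F = ∑ a ∈ s, g a • F a := by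
  classical
  induction s using Finset.induction_on with
  | empty => simp
  | insert a s ha ih =>
    rw [Finset.sum_insert ha, Finset.sum_insert ha, Multiset.add_bind, ih]
    simp [Multiset.bind, Multiset.join]


/-- Let `c` be even and positive with `2`-adic valuation `ν`, and `2^ν ∣ n`.
If `U` is a multisubset of `ZMod n` with multiplicities at most `2` and
`χ(Ū) ≡ 0 (mod c)` (in `ℤ[ζ_n]`) for all nonprincipal characters `χ`, then
`U = x^{E₀}·⟨x^{2n/2^ν}⟩` for some multisubset `E₀` of `{0,…,2n/2^ν − 1}`
(the subgroup `⟨x^{2n/2^ν}⟩` having order `2^{ν−1}`). -/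
theorem multiset_coset_structure_two (c ν n : ℕ) (hc : 0 < c) (hceven : 2 ∣ c)
    (hν : padicValNat 2 c = ν) (hdvd : 2 ^ ν ∣ n) (hn : 0 < n)
    (ζ : ℂ) (hζ : IsPrimitiveRoot ζ n)
    (U : Multiset (ZMod n)) (hU2 : ∀ a : ZMod n, U.count a ≤ 2)
    (hchar : ∀ z : ZMod n, z ≠ 0 →
      ∃ y ∈ Algebra.adjoin ℤ ({ζ} : Set ℂ),
        (U.map (fun i => ζ ^ (i.val * z.val))).sum = (c : ℂ) * y) :
    ∃ E₀ : Multiset ℕ, (∀ a ∈ E₀, a < 2 * n / 2 ^ ν) ∧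
      U = E₀.bind (fun a => (Multiset.range (2 ^ (ν - 1))).map
        (fun j => ((a + j * (2 * n / 2 ^ ν) : ℕ) : ZMod n))) := by
  have : NeZero n := ⟨hn.ne'⟩
  have hpc : 2 ^ ν ∣ c := hν ▸ pow_padicValNat_dvd
  obtain ⟨c', hc'⟩ := hpc
  have hν1 : 1 ≤ ν := by
    rw [← hν]
    exact one_le_padicValNat_of_dvd hc.ne' hceven
  obtain ⟨k, rfl⟩ : ∃ k, ν = k + 1 := ⟨ν - 1, by omega⟩
  obtain ⟨n', hn'⟩ := hdvd
  have hn'0 : 0 < n' := Nat.pos_of_ne_zero (by rintro rfl; simp at hn'; omega)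
  have hN : 2 * n / 2 ^ (k + 1) = 2 * n' := by
    rw [hn', mul_left_comm, Nat.mul_div_cancel_left _ (by positivity)]
  have hNM : n = 2 * n' * 2 ^ k := by rw [hn']; ring
  rw [hN, Nat.add_sub_cancel]
  have hper : ∀ i : ℕ, U.count ((i + 2 * n' : ℕ) : ZMod n) = U.count (i : ZMod n) := by
    have := periodic_of_two_pow_dvd_char_sums k n' ζ (fun i => (U.count (i : ZMod n) : ℤ)) hn'0
      (hn' ▸ hζ) ?_ ?_ ?_
    · intro i; exact_mod_cast this i
    · intro i; rw [← hn']; simp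
    · intro i; exact ⟨by positivity, by exact_mod_cast hU2 i⟩
    · intro z hz
      rw [← hn'] at hz ⊢
      obtain ⟨y, hy, hsum⟩ := hchar (z : ZMod n) (by rwa [Ne, ZMod.natCast_eq_zero_iff])
      have hyi : IsIntegral ℤ y :=
        adjoin_le_integralClosure (hζ.isIntegral hn) hy
      refine ⟨c' * y, (isIntegral_algebraMap (R := ℤ) (x := (c' : ℤ))).mul hyi, ?_⟩
      have hcc : (c : ℂ) = 2 ^ (k + 1) * c' := by exact_mod_cast hc'
      rw [hcc] at hsum
      push_cast
      rw [← mul_assoc, ← hsum]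
      conv_rhs => rw [multiset_eq_sum_range_count hn U]
      rw [← Multiset.coe_mapAddMonoidHom, map_sum, ← Multiset.coe_sumAddMonoidHom, map_sum]
      refine Finset.sum_congr rfl fun i hi => ?_
      have hz1 : ζ ^ z = ζ ^ (z % n) := by
        rw [hζ.eq_orderOf, pow_mod_orderOf]
      simp [ZMod.val_natCast, Nat.mod_eq_of_lt (Finset.mem_range.1 hi), hz1, ← pow_mul, mul_comm]
  have hper' : ∀ i j : ℕ, U.count ((i + j * (2 * n') : ℕ) : ZMod n) = U.count (i : ZMod n) := by
    intro i j
    induction j with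
    | zero => simp
    | succ j ih => rw [← ih, ← hper (i + j * (2 * n')), Nat.succ_mul, ← add_assoc]
  refine ⟨∑ a ∈ Finset.range (2 * n'), Multiset.replicate (U.count (a : ZMod n)) a, ?_, ?_⟩
  · intro a ha
    obtain ⟨b, hb, hab⟩ := Multiset.mem_sum.1 ha
    rw [Multiset.eq_of_mem_replicate hab]
    exact Finset.mem_range.1 hb
  · conv_lhs => rw [multiset_eq_sum_range_count hn U]
    have hr : Finset.range n = Finset.range (2 * n' * 2 ^ k) := by rw [← hNM]
    rw [hr, sum_range_mul_eq]
    rw [sum_replicate_bind, Finset.sum_comm]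
    refine Finset.sum_congr rfl fun a _ => ?_
    simp_rw [hper', ← Multiset.nsmul_singleton]
    rw [← Finset.smul_sum, ← Finset.range_val, ← Multiset.sum_map_singleton
      (Multiset.map _ (Finset.range (2 ^ k)).val), Multiset.map_map]
    rfl
end

section
/- Let c be an odd positive divisor of n and U a multisubset of the cyclic group C_n = ⟨x⟩ with every element occurring at most twice. If χ(Ū) ≡ 0 (mod c) for all nonprincipal characters χ of C_n, then there exists a multisubset E of {0,1,...,n/c − 1} with multiplicities at most 2 such that U = x^E·⟨x^{n/c}⟩. -/
open Polynomial

/-- `ℤ[ζ]` is integrally closed: an algebraic integer `y` with `N y ∈ ℤ[ζ]`, `N ≠ 0`, lies in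
`ℤ[ζ]`. -/
theorem IsPrimitiveRoot.exists_aeval_eq_of_isIntegral {n : ℕ} (hn : 0 < n) {ζ : ℂ}
    (hζ : IsPrimitiveRoot ζ n) {N : ℕ} (hN : N ≠ 0) {y : ℂ} (hy : IsIntegral ℤ y) {P : ℤ[X]}
    (h : aeval ζ P = N * y) : ∃ Q : ℤ[X], aeval ζ Q = y := by
  have : NeZero n := ⟨hn.ne'⟩
  let K := IntermediateField.adjoin ℚ ({ζ} : Set ℂ)
  have hcyc : IsCyclotomicExtension {n} ℚ K := by
    change IsCyclotomicExtension {n} ℚ K.toSubalgebra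
    rw [IntermediateField.adjoin_simple_toSubalgebra_of_isAlgebraic
      (hζ.isIntegral hn).tower_top.isAlgebraic]
    exact hζ.adjoin_isCyclotomicExtension ℚ
  have hζK : ζ ∈ K := IntermediateField.mem_adjoin_simple_self ℚ ζ
  let z : K := ⟨ζ, hζK⟩
  have hz : IsPrimitiveRoot z n := IsPrimitiveRoot.coe_submonoidClass_iff.mp hζ
  have hval (R : ℤ[X]) : ((aeval z R : K) : ℂ) = aeval ζ R := by
    have := aeval_algebraMap_apply ℂ z R
    exact this.symm
  have hyK : y ∈ K := by
    have h1 : y = (N : ℂ)⁻¹ * aeval ζ P := by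
      rw [h, inv_mul_cancel_left₀ (by exact_mod_cast hN)]
    rw [h1, ← hval]
    exact K.mul_mem (K.inv_mem (natCast_mem K N)) (aeval z P).2
  have hyint : IsIntegral ℤ (⟨y, hyK⟩ : K) := by
    rw [← isIntegral_algebraMap_iff (algebraMap K ℂ).injective]
    exact hy
  have hcl := IsCyclotomicExtension.Rat.isIntegralClosure_adjoin_singleton hz
  obtain ⟨w, hw⟩ := hcl.isIntegral_iff.1 hyint
  obtain ⟨Q, hQ⟩ := (Algebra.adjoin_singleton_eq_range_aeval ℤ z ▸ w.2 :
    (w : K) ∈ (aeval z : ℤ[X] →ₐ[ℤ] K).range)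
  refine ⟨Q, ?_⟩
  rw [← hval]
  have h2 : (aeval z Q : K) = ⟨y, hyK⟩ := hQ.trans hw
  rw [h2]

/-- If `P(ζ)` is divisible by `p` among the algebraic integers, then `Φ_n ∣ P` modulo `p`. -/
theorem IsPrimitiveRoot.cyclotomic_dvd_map_of_isIntegral {n : ℕ} (hn : 0 < n) {ζ : ℂ}
    (hζ : IsPrimitiveRoot ζ n) {p : ℕ} (hp : p ≠ 0) (R : Type*) [CommRing R] [CharP R p]
    {y : ℂ} (hy : IsIntegral ℤ y) {P : ℤ[X]} (h : aeval ζ P = p * y) :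
    cyclotomic n R ∣ P.map (Int.castRingHom R) := by
  obtain ⟨Q, rfl⟩ := hζ.exists_aeval_eq_of_isIntegral hn hp hy h
  have h0 : aeval ζ (P - C (p : ℤ) * Q) = 0 := by simp [h]
  have hd := minpoly.isIntegrallyClosed_dvd (hζ.isIntegral hn) h0
  rw [← cyclotomic_eq_minpoly hζ hn] at hd
  simpa using Polynomial.map_dvd (Int.castRingHom R) hd

/-- If `X ^ n - 1` divides the generating polynomial of a period of an `n`-periodic sequence times
`X ^ s - 1`, then the sequence is `s`-periodic. -/
theorem Function.Periodic.of_X_pow_sub_one_dvd {R : Type*} [CommRing R] [IsDomain R] {n : ℕ}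
    (hn : 0 < n) {g : ℕ → R} (hg : Function.Periodic g n) {s : ℕ}
    (h : (X ^ n - 1 : R[X]) ∣ (X ^ s - 1) * ∑ i ∈ Finset.range n, C (g i) * X ^ i) :
    Function.Periodic g s := by
  have key (t : ℕ) : (X ^ n - 1 : R[X]) ∣ ∑ i ∈ Finset.range n, C (g i) * X ^ i
      - X ^ t * ∑ i ∈ Finset.range n, C (g (i + t)) * X ^ i := by
    induction t with
    | zero => simp
    | succ t ih =>
      have hstep : ∑ i ∈ Finset.range n, C (g (i + t)) * X ^ i
          - X * ∑ i ∈ Finset.range n, C (g (i + (t + 1))) * X ^ i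
          = (X ^ n - 1) * - C (g t) := by
        have h1 := Finset.sum_range_succ (fun i => C (g (i + t)) * X ^ i) n
        have h2 := Finset.sum_range_succ' (fun i => C (g (i + t)) * X ^ i) n
        have h3 : X * ∑ i ∈ Finset.range n, C (g (i + (t + 1))) * X ^ i
            = ∑ i ∈ Finset.range n, C (g (i + 1 + t)) * X ^ (i + 1) := by
          rw [Finset.mul_sum]
          refine Finset.sum_congr rfl fun i _ => ?_
          rw [show i + (t + 1) = i + 1 + t by ring]
          ring
        have h4 : g (n + t) = g t := by rw [add_comm]; exact hg t
        rw [h4] at h1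
        simp only [zero_add, pow_zero, mul_one] at h2
        rw [h3]
        linear_combination h2 - h1
      have := dvd_add ih (Dvd.intro (X ^ t * - C (g t)) (show
        (X ^ n - 1 : R[X]) * (X ^ t * - C (g t)) = X ^ t * ((X ^ n - 1) * - C (g t)) by ring))
      rw [← hstep] at this
      convert this using 1
      ring
  have hcop : IsCoprime (X ^ n - 1 : R[X]) (X ^ s) := by
    apply IsCoprime.pow_right
    refine ⟨-1, X ^ (n - 1), ?_⟩
    rw [← pow_succ, Nat.sub_add_cancel hn]
    ring
  have hdvd : (X ^ n - 1 : R[X]) ∣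
      ∑ i ∈ Finset.range n, C (g i) * X ^ i - ∑ i ∈ Finset.range n, C (g (i + s)) * X ^ i := by
    refine hcop.dvd_of_dvd_mul_left ?_
    convert dvd_add h (key s) using 1
    ring
  have hzero := Polynomial.eq_zero_of_dvd_of_degree_lt hdvd (by
    rw [← Finset.sum_sub_distrib, ← C_1, degree_X_pow_sub_C hn]
    refine (Polynomial.degree_sum_le _ _).trans_lt ?_
    refine (Finset.sup_lt_iff (WithBot.bot_lt_coe n)).2 ?_
    intro i hi
    rw [← sub_mul, ← C_sub]
    exact (degree_C_mul_X_pow_le _ _).trans_lt (WithBot.coe_lt_coe.2 (Finset.mem_range.1 hi)))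
  intro x
  have hx := congrArg (coeff · (x % n)) hzero
  have hlt : x % n < n := Nat.mod_lt _ hn
  simp only [coeff_sub, finsetSum_coeff, coeff_C_mul, coeff_X_pow, mul_ite, mul_one, mul_zero,
    Finset.sum_ite_eq, Finset.mem_range, hlt, if_true, coeff_zero] at hx
  have hmod (k : ℕ) : g (x % n + k) = g (x + k) := by
    rw [← hg.map_mod_nat (x % n + k), ← hg.map_mod_nat (x + k), Nat.mod_add_mod]
  have h0 := hmod 0
  simp only [add_zero] at h0
  rw [← hmod s, ← h0]
  exact (sub_eq_zero.1 hx).symm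

/-- If all nontrivial character sums of an `n`-periodic sequence with values in `[0, p)` are
divisible by the prime `p ∣ n`, then the sequence is `n / p`-periodic. -/
theorem periodic_div_prime_of_charSum_dvd {p n : ℕ} (hp : p.Prime) (hpn : p ∣ n) (hn : 0 < n)
    {ζ : ℂ} (hζ : IsPrimitiveRoot ζ n) {f : ℕ → ℕ} (hf : Function.Periodic f n)
    (hlt : ∀ i, f i < p)
    (hchar : ∀ z, ¬ n ∣ z → ∃ y, IsIntegral ℤ y ∧
      ∑ i ∈ Finset.range n, (f i : ℂ) * ζ ^ (i * z) = p * y) :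
    Function.Periodic f (n / p) := by
  have : Fact p.Prime := ⟨hp⟩
  obtain ⟨k, m, hpm, hnm⟩ := Nat.exists_eq_pow_mul_and_not_dvd hn.ne' p hp.ne_one
  have hk : 0 < k := by
    rcases Nat.eq_zero_or_pos k with rfl | hk
    · exact absurd (by simpa [hnm] using hpn) hpm
    · exact hk
  have hm : 0 < m := Nat.pos_of_ne_zero (by rintro rfl; simp at hpm)
  let K := AlgebraicClosure (ZMod p)
  have : CharP K p := charP_of_injective_algebraMap (algebraMap (ZMod p) K).injective p
  have hmK : (m : K) ≠ 0 := by rwa [Ne, CharP.cast_eq_zero_iff K p]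
  have : NeZero (m : K) := ⟨hmK⟩
  obtain ⟨ξ, hξ⟩ := HasEnoughRootsOfUnity.exists_primitiveRoot K m
  let P : ℤ[X] := ∑ i ∈ Finset.range n, C (f i : ℤ) * X ^ i
  have hPK : P.map (Int.castRingHom K) = ∑ i ∈ Finset.range n, C (f i : K) * X ^ i := by
    simp only [P, Polynomial.map_sum, Polynomial.map_mul, Polynomial.map_pow, map_X, map_C]
    refine Finset.sum_congr rfl fun i _ => ?_
    rw [eq_intCast, Int.cast_natCast]
  set e := p ^ k - p ^ (k - 1)
  have hroot (μ : K) (hμ : μ ∈ nthRootsFinset m (1 : K)) :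
      (X - C μ) ^ e ∣ P.map (Int.castRingHom K) := by
    have hμ1 : μ ^ m = 1 := (mem_nthRootsFinset hm 1).1 hμ
    set d := orderOf μ
    have hdm : d ∣ m := orderOf_dvd_of_pow_eq_one hμ1
    obtain ⟨z, hz⟩ := hdm
    have hd : 0 < d := Nat.pos_of_ne_zero (by rintro h; simp [h] at hz; omega)
    have hz0 : 0 < z := Nat.pos_of_ne_zero (by rintro rfl; simp at hz; omega)
    have hnz : n = z * (p ^ k * d) := by rw [hnm, hz]; ring
    have hpkd : 0 < p ^ k * d := Nat.mul_pos (pow_pos hp.pos k) hd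
    have hζz : IsPrimitiveRoot (ζ ^ z) (p ^ k * d) := hζ.pow hn hnz
    have hnd : ¬ n ∣ z := fun h => by
      have h1 := Nat.le_of_dvd hz0 h
      have h2 : p ^ k * d ≤ 1 := by
        rw [hnz] at h1
        exact Nat.le_of_mul_le_mul_left (by simpa using h1) hz0
      have h3 : 1 < p ^ k := Nat.one_lt_pow hk.ne' hp.one_lt
      nlinarith
    obtain ⟨y, hy, hsum⟩ := hchar z hnd
    have hae : aeval (ζ ^ z) P = p * y := by
      rw [← hsum]
      simp only [P, map_sum, map_mul, map_pow, aeval_X, aeval_C]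
      refine Finset.sum_congr rfl fun i _ => ?_
      rw [← pow_mul, mul_comm z i]
      simp
    have hdvd := hζz.cyclotomic_dvd_map_of_isIntegral hpkd hp.ne_zero K hy hae
    have hpd : ¬ p ∣ d := fun h => hpm (hz ▸ h.mul_right z)
    rw [cyclotomic_mul_prime_pow_eq K hpd hk] at hdvd
    refine (pow_dvd_pow_of_dvd ?_ e).trans hdvd
    exact dvd_iff_isRoot.2 ((IsPrimitiveRoot.orderOf μ).isRoot_cyclotomic hd)
  have hprod : (X ^ m - 1 : K[X]) ^ e ∣ P.map (Int.castRingHom K) := by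
    rw [X_pow_sub_one_eq_prod hm hξ, ← Finset.prod_pow]
    refine Finset.prod_dvd_of_coprime (fun μ _ ν _ hne => ?_) hroot
    exact (pairwise_coprime_X_sub_C Function.injective_id hne).pow
  have hpow : p ^ (k - 1) + e = p ^ k := by
    have := Nat.pow_le_pow_right hp.pos (Nat.sub_le k 1)
    omega
  have hnp : n / p = m * p ^ (k - 1) := by
    obtain ⟨j, rfl⟩ := Nat.exists_eq_succ_of_ne_zero hk.ne'
    rw [hnm, Nat.succ_sub_one, pow_succ]
    exact Nat.div_eq_of_eq_mul_left hp.pos (by ring)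
  have hX (j : ℕ) : (X ^ (m * p ^ j) - 1 : K[X]) = (X ^ m - 1) ^ p ^ j := by
    rw [sub_pow_char_pow, pow_mul, one_pow]
  have hfinal : (X ^ n - 1 : K[X]) ∣
      (X ^ (n / p) - 1) * ∑ i ∈ Finset.range n, C (f i : K) * X ^ i := by
    have hXn : (X ^ n - 1 : K[X]) = (X ^ m - 1) ^ p ^ k := by rw [hnm, mul_comm, hX]
    rw [hXn, hnp, hX, ← hpow, pow_add, ← hPK]
    exact mul_dvd_mul_left _ hprod
  have hper : Function.Periodic (fun i => (f i : K)) n := fun i => by simp only [hf i]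
  intro i
  have := hper.of_X_pow_sub_one_dvd hn hfinal i
  have h2 := (CharP.natCast_eq_natCast K p).1 this
  exact Nat.ModEq.eq_of_lt_of_lt h2 (hlt _) (hlt _)

theorem Finset.sum_range_mul_of_periodic {M : Type*} [AddCommMonoid M] {g : ℕ → M} {s : ℕ}
    (hg : Function.Periodic g s) (p : ℕ) :
    ∑ i ∈ Finset.range (p * s), g i = p • ∑ i ∈ Finset.range s, g i := by
  induction p with
  | zero => simp
  | succ p ih =>
    rw [Nat.succ_mul, Finset.sum_range_add, ih, succ_nsmul]
    congr 1
    refine Finset.sum_congr rfl fun i _ => ?_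
    rw [add_comm]
    exact hg.nat_mul p i

/-- If all nontrivial character sums of an `n`-periodic sequence with values in `{0, 1, 2}` are
divisible by the odd divisor `c` of `n`, then the sequence is `n / c`-periodic. -/
theorem periodic_div_of_charSum_dvd {c n : ℕ} (hc : Odd c) (hcn : c ∣ n) (hn : 0 < n)
    {ζ : ℂ} (hζ : IsPrimitiveRoot ζ n) {f : ℕ → ℕ} (hf : Function.Periodic f n)
    (hle : ∀ i, f i ≤ 2)
    (hchar : ∀ z, ¬ n ∣ z → ∃ y, IsIntegral ℤ y ∧
      ∑ i ∈ Finset.range n, (f i : ℂ) * ζ ^ (i * z) = c * y) :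
    Function.Periodic f (n / c) := by
  induction c using Nat.strong_induction_on generalizing n ζ with
  | _ c ih =>
    rcases eq_or_ne c 1 with rfl | hc1
    · simpa using hf
    obtain ⟨p, hp, c', rfl⟩ := Nat.exists_prime_and_dvd hc1
    obtain ⟨hpodd, hc'⟩ := Nat.odd_mul.1 hc
    have hp3 : 2 < p := lt_of_le_of_ne hp.two_le (by rintro rfl; exact absurd hpodd (by decide))
    obtain ⟨r, rfl⟩ := hcn
    have hper := periodic_div_prime_of_charSum_dvd hp (Dvd.intro (c' * r) (by ring)) hn hζ hf
      (fun i => (hle i).trans_lt hp3) (fun z hz => by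
        obtain ⟨y, hy, h⟩ := hchar z hz
        exact ⟨c' * y, (isIntegral_natCast c').mul hy,
          by rw [h]; push_cast; ring⟩)
    rw [mul_assoc, Nat.mul_div_cancel_left _ hp.pos] at hper
    have hn' : 0 < c' * r := Nat.pos_of_mul_pos_left (by rwa [mul_assoc] at hn)
    have hζp : IsPrimitiveRoot (ζ ^ p) (c' * r) := hζ.pow hn (by ring)
    have hc'0 : 0 < c' := hc'.pos
    have hlt : c' < p * c' := by nlinarith
    have := ih c' hlt hc' (Dvd.intro r rfl) hn' hζp hper (fun z hz => by
      obtain ⟨y, hy, h⟩ := hchar (p * z) (fun hd => hz (by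
        rw [mul_assoc] at hd
        exact Nat.dvd_of_mul_dvd_mul_left hp.pos hd))
      refine ⟨y, hy, ?_⟩
      have hg : Function.Periodic (fun i => (f i : ℂ) * ζ ^ (i * (p * z))) (c' * r) := by
        intro i
        simp only [hper i]
        rw [show (i + c' * r) * (p * z) = i * (p * z) + (p * c' * r) * z by ring, pow_add,
          pow_mul ζ (p * c' * r), hζ.pow_eq_one, one_pow, mul_one]
      rw [mul_assoc, Finset.sum_range_mul_of_periodic hg, nsmul_eq_mul, Nat.cast_mul,
        mul_assoc] at h
      have h' := mul_left_cancel₀ (Nat.cast_ne_zero.2 hp.ne_zero) h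
      rw [← h']
      refine Finset.sum_congr rfl fun i _ => ?_
      rw [← pow_mul]
      congr 2
      ring)
    rw [mul_assoc, Nat.mul_div_mul_left _ _ hp.pos]
    exact this

/-- Let `c` be an odd positive divisor of `n`. If `U` is a multisubset of
`ZMod n` with multiplicities at most `2` and `χ(Ū) ≡ 0 (mod c)` (in `ℤ[ζ_n]`) for all
nonprincipal characters `χ`, then `U = x^E·⟨x^{n/c}⟩` for some multisubset `E` of
`{0,…,n/c − 1}` with multiplicities at most `2`. -/
theorem multiset_coset_structure_odd (c n : ℕ) (hcodd : Odd c) (hc : 0 < c) (hdvd : c ∣ n)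
    (hn : 0 < n) (ζ : ℂ) (hζ : IsPrimitiveRoot ζ n)
    (U : Multiset (ZMod n)) (hU2 : ∀ a : ZMod n, U.count a ≤ 2)
    (hchar : ∀ z : ZMod n, z ≠ 0 →
      ∃ y ∈ Algebra.adjoin ℤ ({ζ} : Set ℂ),
        (U.map (fun i => ζ ^ (i.val * z.val))).sum = (c : ℂ) * y) :
    ∃ E : Multiset ℕ, (∀ a ∈ E, a < n / c) ∧ (∀ a : ℕ, E.count a ≤ 2) ∧
      U = E.bind (fun a => (Multiset.range c).map
        (fun j => ((a + j * (n / c) : ℕ) : ZMod n))) := by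
  have : NeZero n := ⟨hn.ne'⟩
  have hs : 0 < n / c := Nat.div_pos (Nat.le_of_dvd hn hdvd) hc
  have hcs : c * (n / c) = n := Nat.mul_div_cancel' hdvd
  let f : ℕ → ℕ := fun i => U.count (i : ZMod n)
  have hper : Function.Periodic f (n / c) := by
    refine periodic_div_of_charSum_dvd hcodd hdvd hn hζ (fun i => by simp [f]) (fun i => hU2 _)
      fun z hz => ?_
    obtain ⟨y, hy, h⟩ := hchar z (by rwa [Ne, ZMod.natCast_eq_zero_iff])
    refine ⟨y, ?_, ?_⟩
    · exact adjoin_le_integralClosure (hζ.isIntegral hn) hy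
    · rw [← h, Finset.sum_multiset_map_count,
        Finset.sum_subset (Finset.subset_univ U.toFinset) (fun a _ ha => by
          rw [Multiset.count_eq_zero_of_notMem (by simpa using ha), zero_smul])]
      refine Finset.sum_nbij' (fun i => (i : ZMod n)) ZMod.val (fun _ _ => Finset.mem_univ _)
        (fun a _ => Finset.mem_range.2 (ZMod.val_lt a))
        (fun i hi => ZMod.val_cast_of_lt (Finset.mem_range.1 hi))
        (fun a _ => ZMod.natCast_zmod_val a) (fun i hi => ?_)
      rw [ZMod.val_cast_of_lt (Finset.mem_range.1 hi), ZMod.val_natCast, nsmul_eq_mul, pow_mul,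
        pow_mul]
      congr 1
      refine pow_eq_pow_mod z ?_
      rw [← pow_mul, mul_comm, pow_mul, hζ.pow_eq_one, one_pow]
  refine ⟨(Multiset.range (n / c)).bind fun a => Multiset.replicate (f a) a, ?_, ?_, ?_⟩
  · intro a ha
    obtain ⟨b, hb, hab⟩ := Multiset.mem_bind.1 ha
    rw [Multiset.eq_of_mem_replicate hab]
    exact Multiset.mem_range.1 hb
  · intro a
    rw [Multiset.count_bind]
    simp only [Multiset.count_replicate]
    change ∑ b ∈ Finset.range (n / c), (if b = a then f b else 0) ≤ 2
    rw [Finset.sum_ite_eq']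
    split_ifs
    · exact hU2 _
    · exact Nat.zero_le _
  · ext g
    have hcount (a : ℕ) (ha : a < n / c) : ((Multiset.range c).map
        (fun j => ((a + j * (n / c) : ℕ) : ZMod n))).count g
          = if g.val % (n / c) = a then 1 else 0 := by
      have hlt (j : ℕ) (hj : j < c) : a + j * (n / c) < n := by nlinarith
      rw [Multiset.count_eq_of_nodup]
      · refine if_congr ?_ rfl rfl
        rw [Multiset.mem_map]
        constructor
        · rintro ⟨j, hj, rfl⟩
          rw [ZMod.val_cast_of_lt (hlt j (Multiset.mem_range.1 hj)), Nat.add_mul_mod_self_right,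
            Nat.mod_eq_of_lt ha]
        · rintro rfl
          refine ⟨g.val / (n / c), Multiset.mem_range.2 ?_, ?_⟩
          · exact Nat.div_lt_of_lt_mul (by rw [mul_comm, hcs]; exact ZMod.val_lt g)
          · rw [Nat.mod_add_div', ZMod.natCast_zmod_val]
      · refine Multiset.Nodup.map_on (fun i hi j hj hij => ?_) (Multiset.nodup_range c)
        have h := congrArg ZMod.val hij
        rw [ZMod.val_cast_of_lt (hlt i (Multiset.mem_range.1 hi)),
          ZMod.val_cast_of_lt (hlt j (Multiset.mem_range.1 hj))] at h
        exact Nat.eq_of_mul_eq_mul_right hs (Nat.add_left_cancel h)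
    rw [Multiset.bind_assoc, Multiset.count_bind]
    simp only [Multiset.count_bind, Multiset.map_replicate, Multiset.sum_replicate]
    change _ = ∑ a ∈ Finset.range (n / c), _
    rw [Finset.sum_congr rfl fun a ha => by rw [hcount a (Finset.mem_range.1 ha)]]
    simp only [smul_eq_mul, mul_ite, mul_one, mul_zero]
    rw [Finset.sum_ite_eq, if_pos (Finset.mem_range.2 (Nat.mod_lt _ hs)), hper.map_mod_nat]
    simp only [f, ZMod.natCast_zmod_val]
end
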